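/- The tempered power law kernels form a Sonin pair from L₁: for 0 < α < 1 and ρ ≥ 0, the functions κ(t) = h_{α,ρ}(t) := t^{α−1} e^{−ρt}/Γ(α) and k(t) = h_{1−α,ρ}(t) + ρ ∫_0^t h_{1−α,ρ}(τ) dτ both belong to C_{-1}(0,∞) and satisfy the Sonin condition (κ * k)(t) = 1 for all t > 0. -/

import Mathlib

open Real Filter MeasureTheory intervalIntegral

/-- The Laplace convolution `(f * g)(t) = ∫_0^t f(t-τ) g(τ) dτ`. -/
noncomputable def lconv (f g : ℝ → ℝ) : ℝ → ℝ :=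
  fun t => ∫ τ in (0:ℝ)..t, f (t - τ) * g τ

/-- The space `C_{-1}(0,∞)`: functions representable as `t^p f₁(t)` with `p > -1`
and `f₁` continuous on `[0,∞)`. -/
def CMinusOne (f : ℝ → ℝ) : Prop :=
  ∃ p : ℝ, p > -1 ∧ ∃ f₁ : ℝ → ℝ, ContinuousOn f₁ (Set.Ici 0) ∧
    ∀ t > (0:ℝ), f t = t ^ p * f₁ t


/-- The class `L₁` of Sonin kernel pairs: `κ, k ∈ C_{-1}(0,∞)` with `(κ * k)(t) = 1`
for all `t > 0`. -/
def SoninPair (κ k : ℝ → ℝ) : Prop :=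
  CMinusOne κ ∧ CMinusOne k ∧ ∀ t > (0:ℝ), lconv κ k t = 1


/-- The tempered power law kernel `h_{μ,ρ}(t) = t^{μ-1} e^{-ρt}/Γ(μ)`. -/
noncomputable def hpowTempered (μ ρ : ℝ) : ℝ → ℝ :=
  fun t => t ^ (μ - 1) * Real.exp (-ρ * t) / Real.Gamma μ

/-!
By Euler's Beta integral the kernels satisfy `h_{a,ρ} * h_{b,ρ} = h_{a+b,ρ}`, so
`h_{α,ρ} * h_{1-α,ρ} = h_{1,ρ} = e^{-ρt}`. By Fubini, convolving with the primitive of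
`h_{1-α,ρ}` gives the primitive of the convolution, hence
`κ * k = e^{-ρt} + ρ ∫_0^t e^{-ρv} dv = 1`.
-/

theorem lconv_comm (f g : ℝ → ℝ) : lconv f g = lconv g f := by
  ext t
  simpa [lconv, mul_comm] using
    (integral_comp_sub_left (fun τ => f (t - τ) * g τ) (a := 0) (b := t) t).symm

theorem lconv_const_mul_right (f g : ℝ → ℝ) (c t : ℝ) :
    lconv f (fun τ => c * g τ) t = c * lconv f g t := by
  simp only [lconv, mul_left_comm _ c, intervalIntegral.integral_const_mul]

theorem intervalIntegral_swap_triangle {E : Type*} [NormedAddCommGroup E] [NormedSpace ℝ E]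
    {F : ℝ → ℝ → E} {a b : ℝ} (hab : a ≤ b)
    (hF : IntegrableOn F.uncurry (Set.Ioc a b ×ˢ Set.Ioc a b ∩ {p | p.2 ≤ p.1})) :
    ∫ x in a..b, ∫ y in a..x, F x y = ∫ y in a..b, ∫ x in y..b, F x y := by
  have hT : MeasurableSet {p : ℝ × ℝ | p.2 ≤ p.1} := measurableSet_le measurable_snd measurable_fst
  have inner_left : ∀ x ∈ Set.uIcc a b,
      ∫ y in a..x, F x y = ∫ y in a..b, {p : ℝ × ℝ | p.2 ≤ p.1}.indicator F.uncurry (x, y) :=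
    fun x hx => (intervalIntegral.integral_indicator (Set.uIcc_of_le hab ▸ hx)).symm
  have inner_right : ∀ y ∈ Set.Ioo a b,
      ∫ x in a..b, {p : ℝ × ℝ | p.2 ≤ p.1}.indicator F.uncurry (x, y) = ∫ x in y..b, F x y := by
    intro y ⟨hay, hyb⟩
    have Ioc_inter_Ici : Set.Ioc a b ∩ Set.Ici y = Set.Icc y b := by grind
    calc ∫ x in a..b, {p : ℝ × ℝ | p.2 ≤ p.1}.indicator F.uncurry (x, y)
        = ∫ x in Set.Ioc a b, (Set.Ici y).indicator (fun x => F x y) x :=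
          integral_of_le hab
      _ = ∫ x in y..b, F x y := by
          rw [setIntegral_indicator measurableSet_Ici, Ioc_inter_Ici, integral_Icc_eq_integral_Ioc,
            integral_of_le hyb.le]
  rw [integral_congr inner_left, intervalIntegral_intervalIntegral_swap,
    integral_congr_Ioo_of_le hab inner_right]
  rw [Set.uIoc_of_le hab]
  exact (integrableOn_indicator_iff hT).2 (Set.inter_comm _ _ ▸ hF)

theorem integral_lconv {f g : ℝ → ℝ} {t : ℝ} (ht : 0 ≤ t)
    (hf : IntervalIntegrable f volume 0 t) (hg : IntervalIntegrable g volume 0 t) :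
    ∫ v in (0:ℝ)..t, lconv f g v = lconv (fun τ => ∫ s in (0:ℝ)..τ, f s) g t := by
  have integrable_extension {φ : ℝ → ℝ} (hφ : IntervalIntegrable φ volume 0 t) :
      Integrable ((Set.Icc 0 t).indicator φ) :=
    (integrable_indicator_iff measurableSet_Icc).2
      ((intervalIntegrable_iff_integrableOn_Icc_of_le ht).1 hφ)
  have integrableOn_triangle : IntegrableOn (fun v τ => f (v - τ) * g τ).uncurry
      (Set.Ioc 0 t ×ˢ Set.Ioc 0 t ∩ {p | p.2 ≤ p.1}) := by
    have hT : MeasurableSet (Set.Ioc 0 t ×ˢ Set.Ioc 0 t ∩ {p : ℝ × ℝ | p.2 ≤ p.1}) :=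
      (measurableSet_Ioc.prod measurableSet_Ioc).inter
        (measurableSet_le measurable_snd measurable_fst)
    refine ((integrable_extension hg).convolution_integrand (ContinuousLinearMap.mul ℝ ℝ)
      (integrable_extension hf)).integrableOn.congr_fun ?_ hT
    rintro ⟨v, τ⟩ ⟨⟨⟨-, hvt⟩, hτ, hτt⟩, hτv : τ ≤ v⟩
    have hτ_mem : τ ∈ Set.Icc 0 t := ⟨hτ.le, hτt⟩
    have hsub_mem : v - τ ∈ Set.Icc 0 t := ⟨sub_nonneg.2 hτv, by linarith⟩
    simp [hτ_mem, hsub_mem, mul_comm, -Set.mem_Icc]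
  simp only [lconv]
  rw [intervalIntegral_swap_triangle ht integrableOn_triangle]
  simp only [intervalIntegral.integral_mul_const, integral_comp_sub_right f, sub_self]

namespace CMinusOne

variable {f g : ℝ → ℝ}

theorem of_continuousOn (hf : ContinuousOn f (Set.Ici 0)) : CMinusOne f :=
  ⟨0, by norm_num, f, hf, fun t _ => by simp⟩

theorem const_mul (c : ℝ) (hf : CMinusOne f) : CMinusOne fun t => c * f t := by
  obtain ⟨p, hp, f₁, hf₁, hf_eq⟩ := hf
  exact ⟨p, hp, fun t => c * f₁ t, hf₁.const_mul c,
    fun t ht => by simp only [hf_eq t ht, mul_left_comm]⟩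

theorem add (hf : CMinusOne f) (hg : CMinusOne g) : CMinusOne fun t => f t + g t := by
  obtain ⟨p, hp, f₁, hf₁, hf_eq⟩ := hf
  obtain ⟨q, hq, g₁, hg₁, hg_eq⟩ := hg
  refine ⟨min p q, lt_min hp hq,
    fun t => t ^ (p - min p q) * f₁ t + t ^ (q - min p q) * g₁ t, ?_, fun t ht => ?_⟩
  · exact ((continuous_rpow_const (sub_nonneg.2 (min_le_left p q))).continuousOn.mul hf₁).add
      ((continuous_rpow_const (sub_nonneg.2 (min_le_right p q))).continuousOn.mul hg₁)
  · simp only [hf_eq t ht, hg_eq t ht, mul_add, ← mul_assoc, ← rpow_add ht, add_sub_cancel]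

theorem continuousOn_Ioi (hf : CMinusOne f) : ContinuousOn f (Set.Ioi 0) := by
  obtain ⟨p, -, f₁, hf₁, hf_eq⟩ := hf
  refine ContinuousOn.congr (.mul (fun t ht => ?_) (hf₁.mono Set.Ioi_subset_Ici_self)) hf_eq
  exact (continuousAt_rpow_const t p (.inl (ne_of_gt ht))).continuousWithinAt

theorem intervalIntegrable (hf : CMinusOne f) {t : ℝ} (ht : 0 ≤ t) :
    IntervalIntegrable f volume 0 t := by
  obtain ⟨p, hp, f₁, hf₁, hf_eq⟩ := hf
  have hf₁' : ContinuousOn f₁ (Set.uIcc 0 t) :=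
    hf₁.mono (Set.uIcc_of_le ht ▸ Set.Icc_subset_Ici_self)
  refine ((intervalIntegrable_rpow' hp).mul_continuousOn hf₁').congr fun τ hτ => ?_
  rw [Set.uIoc_of_le ht] at hτ
  exact (hf_eq τ hτ.1).symm

theorem primitive (hf : CMinusOne f) : CMinusOne fun t => ∫ τ in (0:ℝ)..t, f τ := by
  refine of_continuousOn fun t (ht : 0 ≤ t) => ?_
  have ht' : 0 ≤ t + 1 := by linarith
  have hcont : ContinuousOn (fun t => ∫ τ in (0:ℝ)..t, f τ) (Set.Icc 0 (t + 1)) :=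
    Set.uIcc_of_le ht' ▸
      continuousOn_primitive_interval' (hf.intervalIntegrable ht') Set.left_mem_uIcc
  have hnhds : Set.Icc 0 (t + 1) ∈ nhdsWithin t (Set.Ici 0) :=
    inter_mem_nhdsWithin _ (Iic_mem_nhds (lt_add_one t))
  exact (hcont t ⟨ht, by linarith⟩).mono_of_mem_nhdsWithin hnhds

theorem intervalIntegrable_lconv (hf : CMinusOne f) (hg : CMinusOne g) {t : ℝ} (ht : 0 < t) :
    IntervalIntegrable (fun τ => f (t - τ) * g τ) volume 0 t := by
  -- Near `0` the factor `f (t - τ)` is continuous, near `t` the factor `g τ` is.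
  have half {f g : ℝ → ℝ} (hf : CMinusOne f) (hg : CMinusOne g) :
      IntervalIntegrable (fun τ => f (t - τ) * g τ) volume 0 (t / 2) := by
    refine (hg.intervalIntegrable (half_pos ht).le).continuousOn_mul
      (hf.continuousOn_Ioi.comp (by fun_prop) fun τ hτ => ?_)
    rw [Set.uIcc_of_le (half_pos ht).le] at hτ
    exact Set.mem_Ioi.2 (by linarith [hτ.2])
  have right_half := (half hg hf).comp_sub_left t
  simp only [sub_sub_cancel, sub_zero, sub_half, mul_comm (g _)] at right_half
  exact (half hf hg).trans right_half.symm

end CMinusOne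

theorem lconv_add_right {f g h : ℝ → ℝ} (hf : CMinusOne f) (hg : CMinusOne g)
    (hh : CMinusOne h) {t : ℝ} (ht : 0 < t) :
    lconv f (fun τ => g τ + h τ) t = lconv f g t + lconv f h t := by
  simp only [lconv, mul_add]
  exact integral_add (hf.intervalIntegrable_lconv hg ht) (hf.intervalIntegrable_lconv hh ht)

theorem lconv_primitive_right {f g : ℝ → ℝ} (hf : CMinusOne f) (hg : CMinusOne g) {t : ℝ}
    (ht : 0 ≤ t) :
    lconv f (fun τ => ∫ s in (0:ℝ)..τ, g s) t = ∫ v in (0:ℝ)..t, lconv f g v := by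
  rw [lconv_comm f g, lconv_comm f,
    integral_lconv ht (hg.intervalIntegrable ht) (hf.intervalIntegrable ht)]

theorem exp_add_mul_integral_exp (ρ t : ℝ) :
    Real.exp (-ρ * t) + ρ * ∫ v in (0:ℝ)..t, Real.exp (-ρ * v) = 1 := by
  have scaled : -ρ * ∫ v in (0:ℝ)..t, Real.exp (-ρ * v) = Real.exp (-ρ * t) - 1 := by
    rw [mul_integral_comp_mul_left, integral_exp, mul_zero, Real.exp_zero]
  linarith

theorem soninPair_of_lconv_eq_exp {κ h : ℝ → ℝ} {ρ : ℝ} (hκ : CMinusOne κ) (hh : CMinusOne h)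
    (hconv : ∀ t > 0, lconv κ h t = Real.exp (-ρ * t)) :
    SoninPair κ fun t => h t + ρ * ∫ τ in (0:ℝ)..t, h τ := by
  have hprim : CMinusOne fun t => ρ * ∫ τ in (0:ℝ)..t, h τ := hh.primitive.const_mul ρ
  refine ⟨hκ, hh.add hprim, fun t ht => ?_⟩
  have integral_lconv_eq : ∫ v in (0:ℝ)..t, lconv κ h v = ∫ v in (0:ℝ)..t, Real.exp (-ρ * v) :=
    integral_congr_Ioo_of_le ht.le fun v hv => hconv v hv.1
  rw [lconv_add_right hκ hh hprim ht, lconv_const_mul_right, lconv_primitive_right hκ hh ht.le,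
    hconv t ht, integral_lconv_eq, exp_add_mul_integral_exp]

theorem integral_rpow_mul_sub_rpow {a b t : ℝ} (ha : 0 < a) (hb : 0 < b) (ht : 0 < t) :
    ∫ τ in (0:ℝ)..t, τ ^ (a - 1) * (t - τ) ^ (b - 1) =
      t ^ (a + b - 1) * ProbabilityTheory.beta a b := by
  apply Complex.ofReal_injective
  have beta_eq : Complex.betaIntegral a b = ProbabilityTheory.beta a b := by
    rw [Complex.betaIntegral_eq_Gamma_mul_div a b (by simpa) (by simpa)]
    simp [ProbabilityTheory.beta, Complex.Gamma_ofReal, ← Complex.ofReal_add]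
  calc ((∫ τ in (0:ℝ)..t, τ ^ (a - 1) * (t - τ) ^ (b - 1) : ℝ) : ℂ)
      = ∫ τ in (0:ℝ)..t, (τ : ℂ) ^ ((a : ℂ) - 1) * ((t : ℂ) - τ) ^ ((b : ℂ) - 1) := by
        rw [← intervalIntegral.integral_ofReal]
        refine integral_congr fun τ hτ => ?_
        rw [Set.uIcc_of_le ht.le] at hτ
        simp [Complex.ofReal_cpow hτ.1, Complex.ofReal_cpow (sub_nonneg.2 hτ.2)]
    _ = (t : ℂ) ^ ((a : ℂ) + b - 1) * Complex.betaIntegral a b := Complex.betaIntegral_scaled a b ht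
    _ = ((t ^ (a + b - 1) * ProbabilityTheory.beta a b : ℝ) : ℂ) := by
        rw [beta_eq, Complex.ofReal_mul, Complex.ofReal_cpow ht.le]
        push_cast
        rfl

theorem cMinusOne_hpowTempered {μ : ℝ} (ρ : ℝ) (hμ : 0 < μ) : CMinusOne (hpowTempered μ ρ) :=
  ⟨μ - 1, by linarith, fun t => Real.exp (-ρ * t) / Real.Gamma μ, by fun_prop,
    fun _ _ => mul_div_assoc _ _ _⟩

theorem lconv_hpowTempered {a b t : ℝ} (ρ : ℝ) (ha : 0 < a) (hb : 0 < b) (ht : 0 < t) :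
    lconv (hpowTempered a ρ) (hpowTempered b ρ) t = hpowTempered (a + b) ρ t := by
  have integrand_eq (τ : ℝ) : hpowTempered a ρ (t - τ) * hpowTempered b ρ τ =
      Real.exp (-ρ * t) / (Real.Gamma a * Real.Gamma b) * (τ ^ (b - 1) * (t - τ) ^ (a - 1)) := by
    have exp_eq : Real.exp (-ρ * t) = Real.exp (-ρ * (t - τ)) * Real.exp (-ρ * τ) := by
      rw [← Real.exp_add]; ring_nf
    rw [hpowTempered, hpowTempered, exp_eq]
    ring
  have hΓa : Real.Gamma a ≠ 0 := (Real.Gamma_pos_of_pos ha).ne'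
  have hΓb : Real.Gamma b ≠ 0 := (Real.Gamma_pos_of_pos hb).ne'
  simp only [lconv, integrand_eq]
  rw [intervalIntegral.integral_const_mul, integral_rpow_mul_sub_rpow hb ha ht,
    ProbabilityTheory.beta, hpowTempered, add_comm b a]
  field_simp

theorem hpowTempered_one (ρ t : ℝ) : hpowTempered 1 ρ t = Real.exp (-ρ * t) := by
  simp [hpowTempered]

theorem tempered_power_law_sonin_pair_general (α ρ : ℝ) (hα : 0 < α) (hα1 : α < 1) :
    SoninPair (hpowTempered α ρ)
      (fun t => hpowTempered (1 - α) ρ t +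
        ρ * ∫ τ in (0:ℝ)..t, hpowTempered (1 - α) ρ τ) := by
  have hβ : 0 < 1 - α := sub_pos.2 hα1
  refine soninPair_of_lconv_eq_exp (cMinusOne_hpowTempered ρ hα) (cMinusOne_hpowTempered ρ hβ)
    fun t ht => ?_
  rw [lconv_hpowTempered ρ hα hβ ht, add_sub_cancel, hpowTempered_one]

/-- The tempered power law kernels form a Sonin pair from `L₁`: for `0 < α < 1`
and `ρ ≥ 0`, the functions `κ(t) = h_{α,ρ}(t)` and
`k(t) = h_{1−α,ρ}(t) + ρ ∫_0^t h_{1−α,ρ}(τ) dτ` both belong to `C_{-1}(0,∞)` and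
satisfy the Sonin condition `(κ * k)(t) = 1` for all `t > 0`. -/
theorem tempered_power_law_sonin_pair (α ρ : ℝ) (hα : 0 < α) (hα1 : α < 1)
    (hρ : 0 ≤ ρ) :
    SoninPair (hpowTempered α ρ)
      (fun t => hpowTempered (1 - α) ρ t +
        ρ * ∫ τ in (0:ℝ)..t, hpowTempered (1 - α) ρ τ) :=
  tempered_power_law_sonin_pair_general α ρ hα hα1
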